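/- Let D = {a,b,c,d} and let M be the symmetric {0,1,*}-matrix indexed by D with M_{a,a} = M_{a,b} = M_{b,b} = 0, M_{c,c} = M_{c,d} = M_{d,d} = 0, M_{b,c} = 1, and M_{a,c} = M_{a,d} = M_{b,d} = * (and symmetric entries accordingly). Let G be a finite connected bipartite graph with bipartition (U, V), i.e., every edge of G has one endpoint in U and one endpoint in V. A bipartite clique of G is a set S ⊆ U ∪ V such that every vertex of S ∩ U is adjacent to every vertex of S ∩ V. Then the number of M-partitions of G equals twice the number of bipartite cliques of G. -/

import Mathlib

/-- The three possible entries `0`, `1`, `*` of a matrix-partition matrix. -/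
inductive Entry : Type
  | zero | one | star
deriving DecidableEq

/-- An `M`-partition of a simple graph `G`: adjacent vertices get parts with
`M`-entry in `{1,*}` and distinct non-adjacent vertices get parts with entry in
`{0,*}`. -/
def IsMPartition {D V : Type} (M : D → D → Entry) (G : SimpleGraph V)
    (σ : V → D) : Prop :=
  ∀ u v : V, u ≠ v →
    (G.Adj u v → M (σ u) (σ v) ≠ Entry.zero) ∧
    (¬ G.Adj u v → M (σ u) (σ v) ≠ Entry.one)

/-- The 4×4 matrix of the bipartite-clique lemma, with parts `a,b,c,d = 0,1,2,3`:
`M_{aa}=M_{ab}=M_{bb}=M_{cc}=M_{cd}=M_{dd}=0`, `M_{bc}=1`, `M_{ac}=M_{ad}=M_{bd}=*`. -/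
def M13 : Fin 4 → Fin 4 → Entry :=
  ![![Entry.zero, Entry.zero, Entry.star, Entry.star],
    ![Entry.zero, Entry.zero, Entry.one,  Entry.star],
    ![Entry.star, Entry.one,  Entry.zero, Entry.zero],
    ![Entry.star, Entry.star, Entry.zero, Entry.zero]]

lemma m13_zero : ∀ x y : Fin 4, M13 x y = Entry.zero ↔ ((x < 2) ↔ (y < 2)) := by
  decide

lemma m13_one : ∀ x y : Fin 4, M13 x y = Entry.one ↔ ((x = 1 ∧ y = 2) ∨ (x = 2 ∧ y = 1)) := by
  decide

open Classical in
noncomputable def mkσ {W : Type} (U : Set W) (t : Prop) (S : Set W) (v : W) : Fin 4 :=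
  if (v ∈ U ↔ t) then (if v ∈ S then 1 else 0) else (if v ∈ S then 2 else 3)

lemma mkσ_lt {W : Type} (U : Set W) (t : Prop) (S : Set W) (v : W) :
    mkσ U t S v < 2 ↔ (v ∈ U ↔ t) := by
  unfold mkσ; split_ifs <;> simp_all <;> decide

lemma mkσ_one {W : Type} (U : Set W) (t : Prop) (S : Set W) (v : W) :
    mkσ U t S v = 1 ↔ ((v ∈ U ↔ t) ∧ v ∈ S) := by
  unfold mkσ; split_ifs <;> simp_all

lemma mkσ_two {W : Type} (U : Set W) (t : Prop) (S : Set W) (v : W) :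
    mkσ U t S v = 2 ↔ (¬ (v ∈ U ↔ t) ∧ v ∈ S) := by
  unfold mkσ; split_ifs <;> simp_all

lemma fin4_ext : ∀ x y : Fin 4, (x < 2 ↔ y < 2) → ((x = 1 ∨ x = 2) ↔ (y = 1 ∨ y = 2)) → x = y := by
  decide

/-- For a finite connected bipartite graph `G` with bipartition `(U,V)`, the number of
`M13`-partitions of `G` is twice the number of bipartite cliques of `G`. -/
theorem stmt13 {VV : Type} [Fintype VV] (G : SimpleGraph VV) (hconn : G.Connected)
    (U V : Set VV) (hcover : U ∪ V = Set.univ) (hdisj : U ∩ V = ∅)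
    (hbip : ∀ u v : VV, G.Adj u v → (u ∈ U ∧ v ∈ V) ∨ (u ∈ V ∧ v ∈ U)) :
    Nat.card {σ : VV → Fin 4 // IsMPartition M13 G σ} =
      2 * Nat.card {S : Set VV // ∀ u ∈ S ∩ U, ∀ v ∈ S ∩ V, G.Adj u v} := by
  have hV : ∀ v, v ∈ V ↔ v ∉ U := by
    intro v
    have h1 : v ∈ U ∪ V := hcover ▸ Set.mem_univ v
    have h2 : v ∉ U ∩ V := by rw [hdisj]; simp
    simp only [Set.mem_union, Set.mem_inter_iff] at h1 h2
    tauto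
  have hadj : ∀ u v, G.Adj u v → (u ∈ U ↔ v ∉ U) := by
    intro u v h
    have := hbip u v h
    simp only [hV] at this
    tauto
  obtain ⟨v0⟩ := hconn.nonempty
  have hvalid : ∀ (t : Prop) (S : Set VV), (∀ u ∈ S ∩ U, ∀ v ∈ S ∩ V, G.Adj u v) →
      IsMPartition M13 G (mkσ U t S) := by
    intro t S hS u v _
    refine ⟨fun h => ?_, fun h => ?_⟩
    · rw [Ne, m13_zero, mkσ_lt, mkσ_lt]
      have := hadj u v h
      tauto
    · rw [Ne, m13_one, mkσ_one, mkσ_two, mkσ_one, mkσ_two]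
      intro hh
      have hs : u ∈ S ∧ v ∈ S := by tauto
      have h1 := fun hu hv => hS u ⟨hs.1, hu⟩ v ⟨hs.2, (hV v).2 hv⟩
      have h2 := fun hv hu => (hS v ⟨hs.2, hv⟩ u ⟨hs.1, (hV u).2 hu⟩).symm
      tauto
  let F : Prop × {S : Set VV // ∀ u ∈ S ∩ U, ∀ v ∈ S ∩ V, G.Adj u v} →
      {σ : VV → Fin 4 // IsMPartition M13 G σ} :=
    fun p => ⟨mkσ U p.1 p.2.1, hvalid p.1 p.2.1 p.2.2⟩
  have hF : Function.Bijective F := by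
    constructor
    · rintro ⟨t, S, hS⟩ ⟨t', S', hS'⟩ h
      have h' : ∀ v, mkσ U t S v = mkσ U t' S' v := fun v => congrFun (congrArg Subtype.val h) v
      have ht : t = t' := by
        have := mkσ_lt U t S v0
        rw [h', mkσ_lt] at this
        apply propext
        tauto
      subst ht
      have hSS : S = S' := by
        ext v
        have h1 := mkσ_one U t S v
        have h2 := mkσ_two U t S v
        rw [h', mkσ_one] at h1
        rw [h', mkσ_two] at h2
        tauto
      subst hSS
      rfl
    · rintro ⟨σ, hσ⟩
      have hside : ∀ u v, G.Adj u v → ¬ (σ u < 2 ↔ σ v < 2) := by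
        intro u v h
        rw [← m13_zero]
        exact (hσ u v h.ne).1 h
      have hwalk : ∀ u v, G.Walk u v → ((u ∈ U ↔ σ u < 2) ↔ (v ∈ U ↔ σ v < 2)) := by
        intro u v w
        induction w with
        | nil => rfl
        | cons h _ ih =>
          rw [← ih]
          have h1 := hside _ _ h
          have h2 := hadj _ _ h
          tauto
      have hall : ∀ v, (σ v < 2 ↔ (v ∈ U ↔ (v0 ∈ U ↔ σ v0 < 2))) := by
        intro v
        obtain ⟨w⟩ := hconn.preconnected v0 v
        have := hwalk _ _ w
        tauto
      refine ⟨⟨(v0 ∈ U ↔ σ v0 < 2), {v | σ v = 1 ∨ σ v = 2}, ?_⟩, ?_⟩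
      · rintro u ⟨hu, huU⟩ v ⟨hv, hvV⟩
        rw [hV] at hvV
        by_contra hn
        have hne : u ≠ v := by rintro rfl; exact hvV huU
        have h1 := (hσ u v hne).2 hn
        rw [Ne, m13_one] at h1
        have hu2 := hall u
        have hv2 := hall v
        have hd : ¬ (σ u < 2 ↔ σ v < 2) := by tauto
        simp only [Set.mem_setOf_eq] at hu hv
        rcases hu with hu | hu <;> rcases hv with hv | hv <;> simp [hu, hv] at hd h1
      · apply Subtype.ext
        funext v
        apply fin4_ext
        · change mkσ U _ _ v < 2 ↔ _
          rw [mkσ_lt, hall v]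
        · change (mkσ U _ _ v = 1 ∨ mkσ U _ _ v = 2) ↔ _
          rw [mkσ_one, mkσ_two, Set.mem_setOf_eq]
          tauto
  rw [← Nat.card_congr (Equiv.ofBijective F hF), Nat.card_prod]
  congr 1
  simp
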